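/- arXiv:1808.04254 — 7 statements merged into one kernel-verified Lean document; each statement's English description precedes it below -/
import Mathlib

section
/- The group G (the homophonic quotient of the free group on the 26 letters of the German alphabet by the listed German homophone relations) is the trivial group; that is, every element of G equals the identity. -/
/-- The 26 letters of the Latin alphabet used for German. -/
inductive GermanLetter
  | a | b | c | d | e | f | g | h | i | j | k | l | m
  | n | o | p | q | r | s | t | u | v | w | x | y | z
  deriving DecidableEq

open GermanLetter

/-- A word, read as the ordered product of its letters in the free group. -/
def germanWord (l : List GermanLetter) : FreeGroup GermanLetter :=
  (l.map FreeGroup.of).prod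

/-- The 27 relators A * B⁻¹ coming from the German homophone pairs (A, B). -/
def germanRels : Set (FreeGroup GermanLetter) :=
  { germanWord [w,a,a,g,e] * (germanWord [w,a,g,e])⁻¹,
    germanWord [w,a,h,l] * (germanWord [w,a,l])⁻¹,
    germanWord [m,e,e,r] * (germanWord [m,e,h,r])⁻¹,
    germanWord [b,o,o,t] * (germanWord [b,o,t])⁻¹,
    germanWord [b,u,g] * (germanWord [b,u,k])⁻¹,
    germanWord [a,l,b] * (germanWord [a,l,p])⁻¹,
    germanWord [m,a,n,n] * (germanWord [m,a,n])⁻¹,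
    germanWord [v,i,e,l] * (germanWord [f,i,e,l])⁻¹,
    germanWord [w,a,g,e] * (germanWord [v,a,g,e])⁻¹,
    germanWord [g,e,w,a,l,l,t] * (germanWord [g,e,w,a,l,t])⁻¹,
    germanWord [s,t,a,r,r,t] * (germanWord [s,t,a,r,t])⁻¹,
    germanWord [s,c,h,a,f,f,t] * (germanWord [s,c,h,a,f,t])⁻¹,
    germanWord [k,l,a,p,p,s,t] * (germanWord [k,l,a,p,s,t])⁻¹,
    germanWord [f,a,s,s,t] * (germanWord [f,a,s,t])⁻¹,
    germanWord [z,i,t,t,e,r,n] * (germanWord [z,i,t,h,e,r,n])⁻¹,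
    germanWord [s,t,a,d,t] * (germanWord [s,t,a,t,t])⁻¹,
    germanWord [h,e,m,m,t] * (germanWord [h,e,m,d])⁻¹,
    germanWord [p,a,c,k,t] * (germanWord [p,a,k,t])⁻¹,
    germanWord [k,i,t,z] * (germanWord [k,i,t,t,s])⁻¹,
    germanWord [l,a,x] * (germanWord [l,a,c,h,s])⁻¹,
    germanWord [k,l,i,p,p] * (germanWord [c,l,i,p])⁻¹,
    germanWord [t,s,c,h,a,u] * (germanWord [c,i,a,o])⁻¹,
    germanWord [r,o,i,e,n] * (germanWord [r,e,u,e,n])⁻¹,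
    germanWord [b,e,a,t,e,n] * (germanWord [b,i,e,t,e,n])⁻¹,
    germanWord [t,o,y] * (germanWord [t,o,i])⁻¹,
    germanWord [j,a,e,c,k,c,h,e,n] * (germanWord [y,a,e,k,c,h,e,n])⁻¹,
    germanWord [c,l,i,q,u,e] * (germanWord [k,l,i,c,k,e])⁻¹ }

/-- The German homophonic quotient group. -/
abbrev GermanGroup := PresentedGroup germanRels

/-!
A doubled or silent letter cancels out of its relation and becomes trivial, and a relation between
two words that differ in one letter identifies two letters. The relations that are left then contain
so many letters known to be trivial that each of them disposes of one more.
-/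

/-- A valuation of the letters in a monoid under which the words of each homophone pair other than
(roien, reuen) have the same product. The pairs are recovered from their relators. -/
def RespectsHomophones {M : Type*} [Monoid M] (φ : GermanLetter → M) : Prop :=
  ∀ A B, germanWord A * (germanWord B)⁻¹ ∈
      germanRels \ {germanWord [r, o, i, e, n] * (germanWord [r, e, u, e, n])⁻¹} →
    (A.map φ).prod = (B.map φ).prod

namespace RespectsHomophones

theorem prod_eq {M : Type*} [Monoid M] {φ : GermanLetter → M} (hφ : RespectsHomophones φ)
    (A B : List GermanLetter)
    (hmem : germanWord A * (germanWord B)⁻¹ ∈ germanRels := by simp [germanRels])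
    (hne : germanWord A * (germanWord B)⁻¹ ≠
      germanWord [r, o, i, e, n] * (germanWord [r, e, u, e, n])⁻¹ := by decide) :
    (A.map φ).prod = (B.map φ).prod :=
  hφ A B ⟨hmem, hne⟩

variable {M : Type*} [CancelMonoid M] {φ : GermanLetter → M}

theorem a_eq_one (hφ : RespectsHomophones φ) : φ a = 1 := by
  simpa using hφ.prod_eq [w, a, a, g, e] [w, a, g, e]

theorem o_eq_one (hφ : RespectsHomophones φ) : φ o = 1 := by
  simpa using hφ.prod_eq [b, o, o, t] [b, o, t]

theorem n_eq_one (hφ : RespectsHomophones φ) : φ n = 1 := by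
  simpa using hφ.prod_eq [m, a, n, n] [m, a, n]

theorem l_eq_one (hφ : RespectsHomophones φ) : φ l = 1 := by
  simpa using hφ.prod_eq [g, e, w, a, l, l, t] [g, e, w, a, l, t]

theorem r_eq_one (hφ : RespectsHomophones φ) : φ r = 1 := by
  simpa using hφ.prod_eq [s, t, a, r, r, t] [s, t, a, r, t]

theorem f_eq_one (hφ : RespectsHomophones φ) : φ f = 1 := by
  simpa using hφ.prod_eq [s, c, h, a, f, f, t] [s, c, h, a, f, t]

theorem p_eq_one (hφ : RespectsHomophones φ) : φ p = 1 := by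
  simpa using hφ.prod_eq [k, l, a, p, p, s, t] [k, l, a, p, s, t]

theorem s_eq_one (hφ : RespectsHomophones φ) : φ s = 1 := by
  simpa using hφ.prod_eq [f, a, s, s, t] [f, a, s, t]

theorem h_eq_one (hφ : RespectsHomophones φ) : φ h = 1 := by
  simpa using hφ.prod_eq [w, a, h, l] [w, a, l]

theorem c_eq_one (hφ : RespectsHomophones φ) : φ c = 1 := by
  simpa using hφ.prod_eq [p, a, c, k, t] [p, a, k, t]

theorem g_eq_k (hφ : RespectsHomophones φ) : φ g = φ k := by
  simpa using hφ.prod_eq [b, u, g] [b, u, k]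

theorem b_eq_p (hφ : RespectsHomophones φ) : φ b = φ p := by
  simpa using hφ.prod_eq [a, l, b] [a, l, p]

theorem e_eq_h (hφ : RespectsHomophones φ) : φ e = φ h := by
  simpa using hφ.prod_eq [m, e, e, r] [m, e, h, r]

theorem v_eq_f (hφ : RespectsHomophones φ) : φ v = φ f := by
  simpa using hφ.prod_eq [v, i, e, l] [f, i, e, l]

theorem w_eq_v (hφ : RespectsHomophones φ) : φ w = φ v := by
  simpa using hφ.prod_eq [w, a, g, e] [v, a, g, e]

theorem t_eq_h (hφ : RespectsHomophones φ) : φ t = φ h := by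
  simpa using hφ.prod_eq [z, i, t, t, e, r, n] [z, i, t, h, e, r, n]

theorem d_eq_t (hφ : RespectsHomophones φ) : φ d = φ t := by
  simpa using hφ.prod_eq [s, t, a, d, t] [s, t, a, t, t]

theorem y_eq_i (hφ : RespectsHomophones φ) : φ y = φ i := by
  simpa using hφ.prod_eq [t, o, y] [t, o, i]

theorem m_eq_one (hφ : RespectsHomophones φ) : φ m = 1 := by
  simpa [hφ.d_eq_t, hφ.t_eq_h, hφ.h_eq_one] using hφ.prod_eq [h, e, m, m, t] [h, e, m, d]

theorem z_eq_one (hφ : RespectsHomophones φ) : φ z = 1 := by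
  simpa [hφ.t_eq_h, hφ.h_eq_one, hφ.s_eq_one] using hφ.prod_eq [k, i, t, z] [k, i, t, t, s]

theorem x_eq_one (hφ : RespectsHomophones φ) : φ x = 1 := by
  simpa [hφ.c_eq_one, hφ.h_eq_one, hφ.s_eq_one] using hφ.prod_eq [l, a, x] [l, a, c, h, s]

theorem k_eq_one (hφ : RespectsHomophones φ) : φ k = 1 := by
  simpa [hφ.c_eq_one, hφ.p_eq_one] using hφ.prod_eq [k, l, i, p, p] [c, l, i, p]

theorem i_eq_one (hφ : RespectsHomophones φ) : φ i = 1 := by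
  simpa [hφ.a_eq_one] using hφ.prod_eq [b, e, a, t, e, n] [b, i, e, t, e, n]

theorem u_eq_i (hφ : RespectsHomophones φ) : φ u = φ i := by
  simpa [hφ.t_eq_h, hφ.a_eq_one, hφ.c_eq_one, hφ.h_eq_one, hφ.o_eq_one, hφ.s_eq_one] using
    hφ.prod_eq [t, s, c, h, a, u] [c, i, a, o]

theorem j_eq_y (hφ : RespectsHomophones φ) : φ j = φ y := by
  simpa [hφ.c_eq_one] using hφ.prod_eq [j, a, e, c, k, c, h, e, n] [y, a, e, k, c, h, e, n]

theorem q_eq_one (hφ : RespectsHomophones φ) : φ q = 1 := by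
  simpa [hφ.c_eq_one, hφ.k_eq_one, hφ.u_eq_i, hφ.i_eq_one] using
    hφ.prod_eq [c, l, i, q, u, e] [k, l, i, c, k, e]

end RespectsHomophones

theorem german_group_trivial_general {M : Type*} [CancelMonoid M] {φ : GermanLetter → M}
    (hφ : RespectsHomophones φ) : φ = 1 := by
  have h_i := hφ.i_eq_one
  have h_t := hφ.t_eq_h.trans hφ.h_eq_one
  have h_v := hφ.v_eq_f.trans hφ.f_eq_one
  have h_y := hφ.y_eq_i.trans h_i
  funext letter
  cases letter
  exacts [hφ.a_eq_one, hφ.b_eq_p.trans hφ.p_eq_one, hφ.c_eq_one, hφ.d_eq_t.trans h_t,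
    hφ.e_eq_h.trans hφ.h_eq_one, hφ.f_eq_one, hφ.g_eq_k.trans hφ.k_eq_one, hφ.h_eq_one, h_i,
    hφ.j_eq_y.trans h_y, hφ.k_eq_one, hφ.l_eq_one, hφ.m_eq_one, hφ.n_eq_one, hφ.o_eq_one,
    hφ.p_eq_one, hφ.q_eq_one, hφ.r_eq_one, hφ.s_eq_one, h_t, hφ.u_eq_i.trans h_i, h_v,
    hφ.w_eq_v.trans h_v, hφ.x_eq_one, h_y, hφ.z_eq_one]

theorem map_germanWord {M : Type*} [Monoid M] (f : FreeGroup GermanLetter →* M)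
    (A : List GermanLetter) : f (germanWord A) = (A.map (f ∘ .of)).prod := by
  rw [germanWord, map_list_prod, List.map_map]

theorem respectsHomophones_of :
    RespectsHomophones (PresentedGroup.of (rels := germanRels)) := by
  rintro A B ⟨hmem, -⟩
  have mk_eq := PresentedGroup.mk_eq_mk_of_mul_inv_mem hmem
  rwa [map_germanWord, map_germanWord] at mk_eq

/-- The German homophonic quotient group is trivial. -/
theorem german_group_trivial : ∀ x : GermanGroup, x = 1 := by
  have id_eq_one : MonoidHom.id GermanGroup = 1 :=
    PresentedGroup.ext (congr_fun (german_group_trivial_general respectsHomophones_of))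
  exact DFunLike.congr_fun id_eq_one
end

section
/- The extended German homophonic quotient group G' (on the 30-letter alphabet including ä, ö, ü, ß) is the trivial group; that is, every element of G' equals the identity. -/
/-- The 30-letter extended German alphabet: the 26 Latin letters together with
ä (`ae'`), ö (`oe'`), ü (`ue'`) and ß (`sz`). -/
inductive GermanLetter'
  | a | b | c | d | e | f | g | h | i | j | k | l | m
  | n | o | p | q | r | s | t | u | v | w | x | y | z
  | ae' -- ä
  | oe' -- ö
  | ue' -- ü
  | sz  -- ß
  deriving DecidableEq

open GermanLetter'

/-- A word, read as the ordered product of its letters in the free group. -/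
def germanWord' (l : List GermanLetter') : FreeGroup GermanLetter' :=
  (l.map FreeGroup.of).prod

/-- The 31 relators A * B⁻¹ coming from the extended German homophone pairs (A, B). -/
def germanRels' : Set (FreeGroup GermanLetter') :=
  { germanWord' [w,a,a,g,e] * (germanWord' [w,a,g,e])⁻¹,
    germanWord' [w,a,h,l] * (germanWord' [w,a,l])⁻¹,
    germanWord' [m,e,e,r] * (germanWord' [m,e,h,r])⁻¹,
    germanWord' [b,o,o,t] * (germanWord' [b,o,t])⁻¹,
    germanWord' [b,u,g] * (germanWord' [b,u,k])⁻¹,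
    germanWord' [a,l,b] * (germanWord' [a,l,p])⁻¹,
    germanWord' [m,a,n,n] * (germanWord' [m,a,n])⁻¹,
    germanWord' [v,i,e,l] * (germanWord' [f,i,e,l])⁻¹,
    germanWord' [w,a,g,e] * (germanWord' [v,a,g,e])⁻¹,
    germanWord' [g,e,w,a,l,l,t] * (germanWord' [g,e,w,a,l,t])⁻¹,
    germanWord' [s,t,a,r,r,t] * (germanWord' [s,t,a,r,t])⁻¹,
    germanWord' [s,c,h,a,f,f,t] * (germanWord' [s,c,h,a,f,t])⁻¹,
    germanWord' [k,l,a,p,p,s,t] * (germanWord' [k,l,a,p,s,t])⁻¹,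
    germanWord' [f,a,s,s,t] * (germanWord' [f,a,s,t])⁻¹,
    germanWord' [z,i,t,t,e,r,n] * (germanWord' [z,i,t,h,e,r,n])⁻¹,
    germanWord' [s,t,a,d,t] * (germanWord' [s,t,a,t,t])⁻¹,
    germanWord' [h,e,m,m,t] * (germanWord' [h,e,m,d])⁻¹,
    germanWord' [p,a,c,k,t] * (germanWord' [p,a,k,t])⁻¹,
    germanWord' [k,i,t,z] * (germanWord' [k,i,t,t,s])⁻¹,
    germanWord' [l,a,x] * (germanWord' [l,a,c,h,s])⁻¹,
    germanWord' [k,l,i,p,p] * (germanWord' [c,l,i,p])⁻¹,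
    germanWord' [t,s,c,h,a,u] * (germanWord' [c,i,a,o])⁻¹,
    germanWord' [r,o,i,e,n] * (germanWord' [r,e,u,e,n])⁻¹,
    germanWord' [b,e,a,t,e,n] * (germanWord' [b,i,e,t,e,n])⁻¹,
    germanWord' [t,o,y] * (germanWord' [t,o,i])⁻¹,
    germanWord' [j,ae',c,k,c,h,e,n] * (germanWord' [y,ae',k,c,h,e,n])⁻¹, -- jäckchen / yäkchen
    germanWord' [c,l,i,q,u,e] * (germanWord' [k,l,i,c,k,e])⁻¹,
    germanWord' [h,ae',u,t,i,g] * (germanWord' [h,e,u,t,i,g])⁻¹,        -- häutig / heutig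
    germanWord' [f,r,i,s,oe',r] * (germanWord' [f,r,i,s,e,u,r])⁻¹,      -- frisör / friseur
    germanWord' [m,ue',h] * (germanWord' [m,y])⁻¹,                       -- müh / my
    germanWord' [a,sz] * (germanWord' [a,a,s])⁻¹ }                       -- aß / aas

/-- The extended German homophonic quotient group. -/
abbrev GermanGroup' := PresentedGroup germanRels'

/-!
Since a group is cancellative, a homophone pair whose two spellings agree up to a single letter
kills that letter, and a pair exchanging one letter for another identifies the two. The pairs can be
ordered so that, once the letters already known to be trivial are erased, each pair in turn has one of
these two forms. The identifications `g = k`, `b = p`, `w = v = f` and `u = i` are resolved when `k`,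
`p`, `f` and `i` die.
-/

theorem prod_map_presentedGroupOf_eq_of_mul_inv_mem {α : Type*} {rels : Set (FreeGroup α)}
    {A B : List α} (h : (A.map FreeGroup.of).prod * (B.map FreeGroup.of).prod⁻¹ ∈ rels) :
    (A.map (PresentedGroup.of (rels := rels))).prod = (B.map PresentedGroup.of).prod := by
  have mk_word (L : List α) : PresentedGroup.mk rels (L.map FreeGroup.of).prod =
      (L.map PresentedGroup.of).prod := by
    rw [map_list_prod, List.map_map]
    rfl
  rw [← mk_word, ← mk_word]
  exact PresentedGroup.mk_eq_mk_of_mul_inv_mem h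

theorem presentedGroup_eq_one_of_forall_of_eq_one {α : Type*} {rels : Set (FreeGroup α)}
    (h : ∀ a : α, PresentedGroup.of (rels := rels) a = 1) (x : PresentedGroup rels) : x = 1 :=
  DFunLike.congr_fun (PresentedGroup.ext (φ := MonoidHom.id _) (ψ := 1) h) x

namespace GermanGroup'

open PresentedGroup (of)

theorem homophones_eq (A B : List GermanLetter')
    (h : germanWord' A * (germanWord' B)⁻¹ ∈ germanRels' := by simp [germanRels']) :
    (A.map of).prod = ((B.map of).prod : GermanGroup') :=
  prod_map_presentedGroupOf_eq_of_mul_inv_mem h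

@[simp]
theorem of_a_eq_one : (of a : GermanGroup') = 1 := by
  simpa using homophones_eq [w, a, a, g, e] [w, a, g, e]

@[simp]
theorem of_h_eq_one : (of h : GermanGroup') = 1 := by
  simpa using homophones_eq [w, a, h, l] [w, a, l]

@[simp]
theorem of_e_eq_one : (of e : GermanGroup') = 1 := by
  simpa using homophones_eq [m, e, e, r] [m, e, h, r]

@[simp]
theorem of_o_eq_one : (of o : GermanGroup') = 1 := by
  simpa using homophones_eq [b, o, o, t] [b, o, t]

@[simp]
theorem of_g_eq_of_k : (of g : GermanGroup') = of k := by
  simpa using homophones_eq [b, u, g] [b, u, k]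

@[simp]
theorem of_b_eq_of_p : (of b : GermanGroup') = of p := by
  simpa using homophones_eq [a, l, b] [a, l, p]

@[simp]
theorem of_n_eq_one : (of n : GermanGroup') = 1 := by
  simpa using homophones_eq [m, a, n, n] [m, a, n]

@[simp]
theorem of_v_eq_of_f : (of v : GermanGroup') = of f := by
  simpa using homophones_eq [v, i, e, l] [f, i, e, l]

@[simp]
theorem of_w_eq_of_v : (of w : GermanGroup') = of v := by
  simpa using homophones_eq [w, a, g, e] [v, a, g, e]

@[simp]
theorem of_l_eq_one : (of l : GermanGroup') = 1 := by
  simpa using homophones_eq [g, e, w, a, l, l, t] [g, e, w, a, l, t]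

@[simp]
theorem of_r_eq_one : (of r : GermanGroup') = 1 := by
  simpa using homophones_eq [s, t, a, r, r, t] [s, t, a, r, t]

@[simp]
theorem of_f_eq_one : (of f : GermanGroup') = 1 := by
  simpa using homophones_eq [s, c, h, a, f, f, t] [s, c, h, a, f, t]

@[simp]
theorem of_p_eq_one : (of p : GermanGroup') = 1 := by
  simpa using homophones_eq [k, l, a, p, p, s, t] [k, l, a, p, s, t]

@[simp]
theorem of_s_eq_one : (of s : GermanGroup') = 1 := by
  simpa using homophones_eq [f, a, s, s, t] [f, a, s, t]

@[simp]
theorem of_t_eq_one : (of t : GermanGroup') = 1 := by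
  simpa using homophones_eq [z, i, t, t, e, r, n] [z, i, t, h, e, r, n]

@[simp]
theorem of_d_eq_one : (of d : GermanGroup') = 1 := by
  simpa using homophones_eq [s, t, a, d, t] [s, t, a, t, t]

@[simp]
theorem of_m_eq_one : (of m : GermanGroup') = 1 := by
  simpa using homophones_eq [h, e, m, m, t] [h, e, m, d]

@[simp]
theorem of_c_eq_one : (of c : GermanGroup') = 1 := by
  simpa using homophones_eq [p, a, c, k, t] [p, a, k, t]

@[simp]
theorem of_z_eq_one : (of z : GermanGroup') = 1 := by
  simpa using homophones_eq [k, i, t, z] [k, i, t, t, s]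

@[simp]
theorem of_x_eq_one : (of x : GermanGroup') = 1 := by
  simpa using homophones_eq [l, a, x] [l, a, c, h, s]

@[simp]
theorem of_k_eq_one : (of k : GermanGroup') = 1 := by
  simpa using homophones_eq [k, l, i, p, p] [c, l, i, p]

@[simp]
theorem of_u_eq_of_i : (of u : GermanGroup') = of i := by
  simpa using homophones_eq [t, s, c, h, a, u] [c, i, a, o]

@[simp]
theorem of_i_eq_one : (of i : GermanGroup') = 1 := by
  simpa using (homophones_eq [b, e, a, t, e, n] [b, i, e, t, e, n]).symm

@[simp]
theorem of_y_eq_one : (of y : GermanGroup') = 1 := by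
  simpa using homophones_eq [t, o, y] [t, o, i]

@[simp]
theorem of_ae'_eq_one : (of ae' : GermanGroup') = 1 := by
  simpa using homophones_eq [h, ae', u, t, i, g] [h, e, u, t, i, g]

@[simp]
theorem of_j_eq_one : (of j : GermanGroup') = 1 := by
  simpa using homophones_eq [j, ae', c, k, c, h, e, n] [y, ae', k, c, h, e, n]

@[simp]
theorem of_q_eq_one : (of q : GermanGroup') = 1 := by
  simpa using homophones_eq [c, l, i, q, u, e] [k, l, i, c, k, e]

@[simp]
theorem of_oe'_eq_one : (of oe' : GermanGroup') = 1 := by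
  simpa using homophones_eq [f, r, i, s, oe', r] [f, r, i, s, e, u, r]

@[simp]
theorem of_ue'_eq_one : (of ue' : GermanGroup') = 1 := by
  simpa using homophones_eq [m, ue', h] [m, y]

@[simp]
theorem of_sz_eq_one : (of sz : GermanGroup') = 1 := by
  simpa using homophones_eq [a, sz] [a, a, s]

theorem of_eq_one (letter : GermanLetter') : (of letter : GermanGroup') = 1 := by
  cases letter <;> simp

end GermanGroup'

/-- The extended German homophonic quotient group (including ä, ö, ü, ß) is trivial. -/
theorem german_extended_group_trivial : ∀ x : GermanGroup', x = 1 :=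
  presentedGroup_eq_one_of_forall_of_eq_one GermanGroup'.of_eq_one
end

section
/- The ordered decomposition uniquely encodes any formal composition of Korean letters: the concatenation (flatten) map from lists of syllable patterns to strings over {consonant, vowel} is injective. That is, if two lists L₁ and L₂ of elements of P have equal concatenations (L₁.flatten = L₂.flatten as lists over Bool), then L₁ = L₂. -/
/-- The three Korean syllable patterns, with a consonant encoded as `false`
and a vowel encoded as `true`: c+v, c+v+c, and c+v+c+c. -/
def koreanPatterns : Set (List Bool) :=
  {[false, true], [false, true, false], [false, true, false, false]}

/-!
Reading from the left, c+v is a prefix of the two other patterns, so the end of a syllable cannot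
be recognised without looking ahead. Reading from the right there is no ambiguity: no pattern is a
suffix of another one, and of two patterns ending the same string one is a suffix of the other.
So the last syllable is determined by the string, and induction decodes the rest.
-/

open InformationTheory

section SuffixCode

variable {α : Type*}

theorem eq_nil_of_flatten_eq_nil {L : List (List α)} (hnil : [] ∉ L) (h : L.flatten = []) :
    L = [] :=
  List.eq_nil_iff_forall_not_mem.2 fun w hw => hnil (List.flatten_eq_nil_iff.1 h w hw ▸ hw)

variable {S : Set (List α)}

theorem append_inj_of_isAntichain_isSuffix (hS : IsAntichain (· <:+ ·) S) {x y u v : List α}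
    (hu : u ∈ S) (hv : v ∈ S) (h : x ++ u = y ++ v) : x = y ∧ u = v := by
  obtain rfl : u = v := by
    have hvx : v <:+ x ++ u := h ▸ List.suffix_append y v
    rcases List.suffix_or_suffix_of_suffix (List.suffix_append x u) hvx with huv | hvu
    · exact hS.eq hu hv huv
    · exact hS.eq' hu hv hvu
  exact ⟨List.append_cancel_right h, rfl⟩

theorem uniquelyDecodable_of_isAntichain_isSuffix (hS : IsAntichain (· <:+ ·) S)
    (hnil : [] ∉ S) : UniquelyDecodable S := by
  intro L₁ L₂ h₁ h₂ h
  induction L₁ using List.reverseRecOn generalizing L₂ with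
  | nil => exact (eq_nil_of_flatten_eq_nil (fun hmem => hnil (h₂ _ hmem)) h.symm).symm
  | append_singleton L u ih =>
    rcases L₂.eq_nil_or_concat' with rfl | ⟨M, v, rfl⟩
    · exact eq_nil_of_flatten_eq_nil (fun hmem => hnil (h₁ _ hmem)) h
    · rw [List.forall_mem_append, List.forall_mem_singleton] at h₁ h₂
      rw [List.flatten_concat, List.flatten_concat] at h
      obtain ⟨hflatten, rfl⟩ := append_inj_of_isAntichain_isSuffix hS h₁.2 h₂.2 h
      rw [ih M h₁.1 h₂.1 hflatten]

end SuffixCode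

theorem isAntichain_isSuffix_koreanPatterns : IsAntichain (· <:+ ·) koreanPatterns := by
  rintro u (rfl | rfl | rfl) v (rfl | rfl | rfl) <;> simp [List.suffix_cons_iff]

theorem nil_notMem_koreanPatterns : [] ∉ koreanPatterns := by
  simp [koreanPatterns]

/-- Ordered decomposition uniquely encodes any formal composition of Korean letters:
the concatenation map from lists of syllable patterns to strings over
{consonant, vowel} is injective. -/
theorem korean_ordered_decomposition_unique
    (L₁ L₂ : List (List Bool))
    (h₁ : ∀ p ∈ L₁, p ∈ koreanPatterns)
    (h₂ : ∀ p ∈ L₂, p ∈ koreanPatterns)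
    (h : L₁.flatten = L₂.flatten) : L₁ = L₂ :=
  uniquelyDecodable_of_isAntichain_isSuffix isAntichain_isSuffix_koreanPatterns
    nil_notMem_koreanPatterns L₁ L₂ h₁ h₂ h
end

section
/- In the Korean homophonic quotient group G_K, the image of every one of the 19 consonants G, GG, N, D, DD, L, M, B, BB, S, SS, NG, J, JJ, CH, K, T, P, H equals the identity. -/
/-- The 40 Korean characters: 19 consonants followed by 21 vowels. -/
inductive KChar
  -- consonants: ㄱ ㄲ ㄴ ㄷ ㄸ ㄹ ㅁ ㅂ ㅃ ㅅ ㅆ ㅇ ㅈ ㅉ ㅊ ㅋ ㅌ ㅍ ㅎ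
  | G | GG | N | D | DD | L | M | B | BB | S | SS | NG | J | JJ | CH | K | T | P | H
  -- vowels: ㅏ ㅐ ㅑ ㅒ ㅓ ㅔ ㅕ ㅖ ㅗ ㅘ ㅙ ㅚ ㅛ ㅜ ㅝ ㅞ ㅟ ㅠ ㅡ ㅢ ㅣ
  | A | AE | YA | YAE | EO | E | YEO | YE | O | WA | WAE | OE | YO | U | WO | WE | WI | YU | EU | UI | I
  deriving DecidableEq

open KChar

/-- A word, read as the ordered product of its characters in the free group. -/
def kWord (l : List KChar) : FreeGroup KChar :=
  (l.map FreeGroup.of).prod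

/-- The 37 relators W₁ * W₂⁻¹ coming from the Korean homophone relations W₁ = W₂. -/
def koreanRels : Set (FreeGroup KChar) :=
  { kWord [NG,A,N,NG,I,L,H,A,D,A] * (kWord [NG,A,N,I,L,H,A,D,A])⁻¹,
    kWord [B,U,NG,EO,K] * (kWord [B,U,NG,EO,G])⁻¹,
    kWord [B,A,GG] * (kWord [B,A,G])⁻¹,
    kWord [N,A,S] * (kWord [N,A,D])⁻¹,
    kWord [N,A,J] * (kWord [N,A,D])⁻¹,
    kWord [N,A,CH] * (kWord [N,A,D])⁻¹,
    kWord [B,A,T] * (kWord [B,A,D])⁻¹,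
    kWord [B,U,L,S,O] * (kWord [B,U,L,SS,O])⁻¹,
    kWord [J,I,P] * (kWord [J,I,B])⁻¹,
    kWord [NG,A,P,M,A,D,A,NG] * (kWord [NG,A,M,M,A,D,A,NG])⁻¹,
    kWord [NG,I,SS,N,EU,N] * (kWord [NG,I,N,N,EU,N])⁻¹,
    kWord [G,U,G,M,U,L] * (kWord [G,U,NG,M,U,L])⁻¹,
    kWord [N,O,H,N,EU,N] * (kWord [N,O,N,N,EU,N])⁻¹,
    kWord [S,U,T,H,A,D,A] * (kWord [S,U,T,A,D,A])⁻¹,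
    kWord [NG,U,S,D,A] * (kWord [NG,U,D,DD,A])⁻¹,
    kWord [NG,YA,G,J,I] * (kWord [NG,YA,G,JJ,I])⁻¹,
    kWord [M,A,G,L,O,N] * (kWord [M,A,NG,N,O,N])⁻¹,
    kWord [G,U,G,B,A,B] * (kWord [G,U,G,BB,A,B])⁻¹,
    kWord [N,EO,L,B,D,A] * (kWord [N,EO,L,DD,A])⁻¹,
    kWord [G,A,J,I,NG,EO] * (kWord [G,A,J,YEO])⁻¹,
    kWord [G,A,J,YEO] * (kWord [G,A,J,EO])⁻¹,
    kWord [T,O,NG,G,YE] * (kWord [T,O,NG,G,E])⁻¹,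
    kWord [H,UI,M,I] * (kWord [H,I,M,I])⁻¹,
    kWord [G,EU,M,G,OE] * (kWord [G,EU,M,G,WE])⁻¹,
    kWord [N,U,NG,I,D,A] * (kWord [N,WI,D,A])⁻¹,
    kWord [D,OE,NG,EO] * (kWord [D,WAE])⁻¹,
    kWord [SS,A,NG,I,D,A] * (kWord [SS,AE,D,A])⁻¹,
    kWord [T,EU,NG,I,D,A] * (kWord [T,UI,D,A])⁻¹,
    kWord [T,UI,D,A] * (kWord [T,I,D,A])⁻¹,
    kWord [M,I,NG,A] * (kWord [M,YA])⁻¹,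
    kWord [SS,O,NG,I,D,A] * (kWord [SS,OE,D,A])⁻¹,
    kWord [WAE] * (kWord [O,AE])⁻¹,
    kWord [WO] * (kWord [U,EO])⁻¹,
    kWord [YO] * (kWord [I,O])⁻¹,
    kWord [YU] * (kWord [I,U])⁻¹,
    kWord [UI] * (kWord [E])⁻¹,
    kWord [WA] * (kWord [O,A])⁻¹ }

/-- The Korean homophonic quotient group. -/
abbrev KoreanGroup := PresentedGroup koreanRels

/-!
Cancelling the common prefix and suffix of a homophone relation often leaves an identity between
single characters. Two consonants die at once: ㅇ, dropped between ㄴ and ㅣ, and ㅎ, dropped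
between ㅌ and ㅏ. Single-letter exchanges spread this, first along ㅇ → ㄱ → ㄲ, ㅋ, then along
ㅎ → ㄴ → ㅆ → ㅅ → ㄷ → ㅈ, ㅊ, ㅌ and ㅈ → ㅉ. Erasing dead letters from the relations ㅅㄷ = ㄷㄸ,
ㄱㄹ = ㅇㄴ and ㅂㄷ = ㄸ kills ㄸ, ㄹ and ㅂ, and further exchanges carry ㅂ to ㅃ, ㅍ and ㅁ.
-/

section PresentedGroup

variable {α : Type*} {rels : Set (FreeGroup α)}

theorem mk_prod_map_of (l : List α) :
    PresentedGroup.mk rels (l.map FreeGroup.of).prod =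
      (l.map (PresentedGroup.of (rels := rels))).prod := by
  rw [map_list_prod, List.map_map]
  rfl

theorem prod_map_of_eq_of_append_mem {u w₁ w₂ v : List α}
    (h : ((u ++ w₁ ++ v).map FreeGroup.of).prod * ((u ++ w₂ ++ v).map FreeGroup.of).prod⁻¹ ∈ rels) :
    (w₁.map (PresentedGroup.of (rels := rels))).prod =
      (w₂.map (PresentedGroup.of (rels := rels))).prod := by
  have whole_words_eq := PresentedGroup.mk_eq_mk_of_mul_inv_mem h
  rw [mk_prod_map_of, mk_prod_map_of] at whole_words_eq
  simpa only [List.map_append, List.prod_append, mul_left_inj, mul_right_inj] using whole_words_eq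

end PresentedGroup

namespace KoreanGroup

open PresentedGroup (of)

/- The default proof of `h` looks the relator up in `koreanRels`, so that a homophone relation is
invoked just by splitting its two sides into `u`, the parts that differ, and `v`. -/
theorem prod_map_of_eq (u w₁ w₂ v : List KChar)
    (h : kWord (u ++ w₁ ++ v) * (kWord (u ++ w₂ ++ v))⁻¹ ∈ koreanRels := by
      simp only [koreanRels, Set.mem_insert_iff, List.cons_append, List.nil_append, List.append_nil,
        true_or, or_true]) :
    (w₁.map of : List KoreanGroup).prod = (w₂.map of).prod :=
  prod_map_of_eq_of_append_mem h

theorem of_NG_eq_one : (of NG : KoreanGroup) = 1 := by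
  simpa using prod_map_of_eq [NG,A,N] [NG] [] [I,L,H,A,D,A]

theorem of_G_eq_one : (of G : KoreanGroup) = 1 := by
  simpa [of_NG_eq_one] using prod_map_of_eq [G,U] [G] [NG] [M,U,L]

theorem of_GG_eq_one : (of GG : KoreanGroup) = 1 := by
  simpa [of_G_eq_one] using prod_map_of_eq [B,A] [GG] [G] []

theorem of_K_eq_one : (of K : KoreanGroup) = 1 := by
  simpa [of_G_eq_one] using prod_map_of_eq [B,U,NG,EO] [K] [G] []

theorem of_H_eq_one : (of H : KoreanGroup) = 1 := by
  simpa using prod_map_of_eq [S,U,T] [H] [] [A,D,A]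

theorem of_N_eq_one : (of N : KoreanGroup) = 1 := by
  simpa [of_H_eq_one] using (prod_map_of_eq [N,O] [H] [N] [N,EU,N]).symm

theorem of_SS_eq_one : (of SS : KoreanGroup) = 1 := by
  simpa [of_N_eq_one] using prod_map_of_eq [NG,I] [SS] [N] [N,EU,N]

theorem of_S_eq_one : (of S : KoreanGroup) = 1 := by
  simpa [of_SS_eq_one] using prod_map_of_eq [B,U,L] [S] [SS] [O]

theorem of_D_eq_one : (of D : KoreanGroup) = 1 := by
  simpa [of_S_eq_one] using (prod_map_of_eq [N,A] [S] [D] []).symm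

theorem of_J_eq_one : (of J : KoreanGroup) = 1 := by
  simpa [of_D_eq_one] using prod_map_of_eq [N,A] [J] [D] []

theorem of_CH_eq_one : (of CH : KoreanGroup) = 1 := by
  simpa [of_D_eq_one] using prod_map_of_eq [N,A] [CH] [D] []

theorem of_T_eq_one : (of T : KoreanGroup) = 1 := by
  simpa [of_D_eq_one] using prod_map_of_eq [B,A] [T] [D] []

theorem of_JJ_eq_one : (of JJ : KoreanGroup) = 1 := by
  simpa [of_J_eq_one] using (prod_map_of_eq [NG,YA,G] [J] [JJ] [I]).symm

theorem of_DD_eq_one : (of DD : KoreanGroup) = 1 := by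
  simpa [of_S_eq_one, of_D_eq_one] using (prod_map_of_eq [NG,U] [S,D] [D,DD] [A]).symm

theorem of_L_eq_one : (of L : KoreanGroup) = 1 := by
  simpa [of_G_eq_one, of_NG_eq_one, of_N_eq_one] using prod_map_of_eq [M,A] [G,L] [NG,N] [O,N]

theorem of_B_eq_one : (of B : KoreanGroup) = 1 := by
  simpa [of_D_eq_one, of_DD_eq_one] using prod_map_of_eq [N,EO,L] [B,D] [DD] [A]

theorem of_BB_eq_one : (of BB : KoreanGroup) = 1 := by
  simpa [of_B_eq_one] using (prod_map_of_eq [G,U,G] [B] [BB] [A,B]).symm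

theorem of_P_eq_one : (of P : KoreanGroup) = 1 := by
  simpa [of_B_eq_one] using prod_map_of_eq [J,I] [P] [B] []

theorem of_M_eq_one : (of M : KoreanGroup) = 1 := by
  simpa [of_P_eq_one] using (prod_map_of_eq [NG,A] [P] [M] [M,A,D,A,NG]).symm

end KoreanGroup

/-- In the Korean homophonic quotient group, the image of every one of the 19
consonants equals the identity. -/
theorem korean_consonants_trivial :
    ∀ c ∈ [G, GG, N, D, DD, L, M, B, BB, S, SS, NG, J, JJ, CH, K, T, P, H],
      (PresentedGroup.of c : KoreanGroup) = 1 := by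
  open KoreanGroup in
  simp [of_G_eq_one, of_GG_eq_one, of_N_eq_one, of_D_eq_one, of_DD_eq_one, of_L_eq_one,
    of_M_eq_one, of_B_eq_one, of_BB_eq_one, of_S_eq_one, of_SS_eq_one, of_NG_eq_one, of_J_eq_one,
    of_JJ_eq_one, of_CH_eq_one, of_K_eq_one, of_T_eq_one, of_P_eq_one, of_H_eq_one]
end

section
/- In the Korean homophonic quotient group G_K, the images of the vowels satisfy A = AE = YA = EO = YEO (all five images are equal). -/
open KChar

/-!
In the group, relation (1) cancels to `NG = 1`, and then (20) and (21) cancel to `I = 1`. Hence the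
letters `NG` and `I` can be deleted from every word, so that the vowel contractions become
equalities of vowels; in particular (31) gives `OE = O`. The equality `EO = AE` comes from
`D·O·EO = D·OE·NG·EO = D·WAE = D·O·AE`.
-/

theorem mk_kWord (rels : Set (FreeGroup KChar)) (l : List KChar) :
    PresentedGroup.mk rels (kWord l) = (l.map PresentedGroup.of).prod := by
  rw [kWord, map_list_prod, List.map_map]
  rfl

theorem prod_map_of_eq_of_mem (rels : Set (FreeGroup KChar)) (l₁ l₂ : List KChar)
    (h : kWord l₁ * (kWord l₂)⁻¹ ∈ rels) :
    (l₁.map (PresentedGroup.of (rels := rels))).prod = (l₂.map PresentedGroup.of).prod := by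
  simpa only [mk_kWord] using PresentedGroup.mk_eq_mk_of_mul_inv_mem h

namespace KoreanGroup

open PresentedGroup (of)

theorem of_YEO_eq_of_EO : (of YEO : KoreanGroup) = of EO := by
  simpa using prod_map_of_eq_of_mem koreanRels [G,A,J,YEO] [G,A,J,EO] (by simp [koreanRels])

theorem of_I_eq_one : (of I : KoreanGroup) = 1 := by
  simpa [of_NG_eq_one, of_YEO_eq_of_EO] using
    prod_map_of_eq_of_mem koreanRels [G,A,J,I,NG,EO] [G,A,J,YEO] (by simp [koreanRels])

theorem of_YA_eq_of_A : (of YA : KoreanGroup) = of A := by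
  simpa [of_NG_eq_one, of_I_eq_one] using
    (prod_map_of_eq_of_mem koreanRels [M,I,NG,A] [M,YA] (by simp [koreanRels])).symm

theorem of_AE_eq_of_A : (of AE : KoreanGroup) = of A := by
  simpa [of_NG_eq_one, of_I_eq_one] using
    (prod_map_of_eq_of_mem koreanRels [SS,A,NG,I,D,A] [SS,AE,D,A] (by simp [koreanRels])).symm

theorem of_OE_eq_of_O : (of OE : KoreanGroup) = of O := by
  simpa [of_NG_eq_one, of_I_eq_one] using
    (prod_map_of_eq_of_mem koreanRels [SS,O,NG,I,D,A] [SS,OE,D,A] (by simp [koreanRels])).symm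

theorem of_WAE_eq_of_O_mul_of_AE : (of WAE : KoreanGroup) = of O * of AE := by
  simpa using prod_map_of_eq_of_mem koreanRels [WAE] [O,AE] (by simp [koreanRels])

theorem of_OE_mul_of_EO_eq_of_WAE : (of OE * of EO : KoreanGroup) = of WAE := by
  simpa [of_NG_eq_one] using
    prod_map_of_eq_of_mem koreanRels [D,OE,NG,EO] [D,WAE] (by simp [koreanRels])

theorem of_EO_eq_of_AE : (of EO : KoreanGroup) = of AE := by
  apply mul_left_cancel (a := of O)
  calc
    of O * of EO = of OE * of EO := by rw [of_OE_eq_of_O]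
    _ = of WAE := of_OE_mul_of_EO_eq_of_WAE
    _ = of O * of AE := of_WAE_eq_of_O_mul_of_AE

end KoreanGroup

/-- In the Korean homophonic quotient group, ㅏ = ㅐ = ㅑ = ㅓ = ㅕ. -/
theorem korean_A_class :
    (PresentedGroup.of A : KoreanGroup) = PresentedGroup.of AE ∧
    (PresentedGroup.of AE : KoreanGroup) = PresentedGroup.of YA ∧
    (PresentedGroup.of YA : KoreanGroup) = PresentedGroup.of EO ∧
    (PresentedGroup.of EO : KoreanGroup) = PresentedGroup.of YEO := by
  open KoreanGroup in
  exact ⟨of_AE_eq_of_A.symm, of_AE_eq_of_A.trans of_YA_eq_of_A.symm,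
    of_YA_eq_of_A.trans (of_EO_eq_of_AE.trans of_AE_eq_of_A).symm, of_YEO_eq_of_EO.symm⟩
end

section
/- In the Turkish homophonic quotient group G_T, the images of the letters h and t each equal the identity. -/
/-- The 29 letters of the Modern Turkish alphabet:
a, b, c, ç (`cc`), d, e, f, g, ğ (`gg`, soft g), h, ı (`ii`, dotless i), i, j, k,
l, m, n, o, ö (`oo`), p, r, s, ş (`ss`), t, u, ü (`uu`), v, y, z. -/
inductive TLetter
  | a | b | c
  | cc -- ç
  | d | e | f | g
  | gg -- ğ (soft g)
  | h
  | ii -- ı (dotless i)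
  | i | j | k | l | m | n | o
  | oo -- ö
  | p | r | s
  | ss -- ş
  | t | u
  | uu -- ü
  | v | y | z
  deriving DecidableEq

open TLetter

/-- A word, read as the ordered product of its letters in the free group. -/
def tWord (l : List TLetter) : FreeGroup TLetter :=
  (l.map FreeGroup.of).prod

/-- The relators A * B⁻¹ coming from the Turkish homophone pairs (A, B). -/
def turkishRels : Set (FreeGroup TLetter) :=
  { tWord [k,a,a,n] * (tWord [k,a,gg,a,n])⁻¹,               -- kaan / kağan
    tWord [d,e,r,s,h,a,n,e] * (tWord [d,e,r,s,a,n,e])⁻¹,    -- dershane / dersane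
    tWord [h,a,c,e,t,t,e,p,e] * (tWord [h,a,c,e,t,e,p,e])⁻¹, -- hacettepe / hacetepe
    tWord [a,n,ii,t,t,e,p,e] * (tWord [a,n,ii,t,e,p,e])⁻¹,  -- anıttepe / anıtepe
    tWord [b,a,k,a,y,ii,m] * (tWord [b,a,k,ii,y,ii,m])⁻¹,   -- bakayım / bakıyım
    tWord [i,cc,e,c,e,k] * (tWord [i,cc,i,c,e,k])⁻¹,        -- içecek / içicek
    tWord [a,gg,a,b,e,y] * (tWord [a,b,i])⁻¹ }              -- ağabey / abi

/-- The Turkish homophonic quotient group. -/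
abbrev TurkishGroup := PresentedGroup turkishRels

theorem tWord_cons (x : TLetter) (s : List TLetter) :
    tWord (x :: s) = FreeGroup.of x * tWord s := by
  simp only [tWord, List.map_cons, List.prod_cons]

theorem tWord_append (p s : List TLetter) : tWord (p ++ s) = tWord p * tWord s := by
  simp only [tWord, List.map_append, List.prod_append]

theorem mk_eq_one_of_insertion_relator_mem {α : Type*} {rels : Set (FreeGroup α)}
    {u w v : FreeGroup α} (hrel : u * w * v * (u * v)⁻¹ ∈ rels) :
    PresentedGroup.mk rels w = 1 := by
  have huwv : PresentedGroup.mk rels (u * w * v) = PresentedGroup.mk rels (u * v) :=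
    PresentedGroup.mk_eq_mk_of_mul_inv_mem hrel
  simpa only [map_mul, mul_left_inj, mul_eq_left] using huwv

theorem of_eq_one_of_letter_insertion_mem {rels : Set (FreeGroup TLetter)}
    (p s : List TLetter) {x : TLetter}
    (hrel : tWord (p ++ x :: s) * (tWord (p ++ s))⁻¹ ∈ rels) :
    (PresentedGroup.of x : PresentedGroup rels) = 1 := by
  rw [tWord_append, tWord_cons, ← mul_assoc, tWord_append] at hrel
  exact mk_eq_one_of_insertion_relator_mem hrel

/-- In the Turkish homophonic quotient group, the images of h and t each equal
the identity. -/
theorem turkish_h_t_trivial :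
    (PresentedGroup.of h : TurkishGroup) = 1 ∧
    (PresentedGroup.of t : TurkishGroup) = 1 := by
  have dershane_mem :
      tWord [d,e,r,s,h,a,n,e] * (tWord [d,e,r,s,a,n,e])⁻¹ ∈ turkishRels := by
    simp [turkishRels]
  have anittepe_mem :
      tWord [a,n,ii,t,t,e,p,e] * (tWord [a,n,ii,t,e,p,e])⁻¹ ∈ turkishRels := by
    simp [turkishRels]
  exact ⟨of_eq_one_of_letter_insertion_mem [d,e,r,s] [a,n,e] dershane_mem,
    of_eq_one_of_letter_insertion_mem [a,n,ii] [t,e,p,e] anittepe_mem⟩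
end

section
/- The Turkish homophonic quotient group G_T is a free group, with the images of the 23 letters b, c, ç, d, e, f, g, j, k, l, m, n, o, ö, p, r, s, ş, u, ü, v, y, z as a free basis: there is a group isomorphism from the free group on 23 generators onto G_T sending the i-th generator to the image of the i-th letter in this list. -/
open TLetter

/-- The 23 letters b, c, ç, d, e, f, g, j, k, l, m, n, o, ö, p, r, s, ş, u, ü, v,
y, z, in order. -/
def turkishBasis : Fin 23 → TLetter :=
  ![b, c, cc, d, e, f, g, j, k, l, m, n, o, oo, p, r, s, ss, u, uu, v, y, z]

/-!
Cancelling common prefixes and suffixes, the homophone pairs say that `ğ`, `h` and `t` are trivial,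
that `ı = a` and `i = e`, and, from `ağabey = abi`, that `a b e y = b e`, i.e. that `a` is the
conjugate of `y⁻¹` by `b e`. These equations express the six letters `a`, `ğ`, `h`, `ı`, `i`, `t` in
terms of the other 23 and impose nothing on those, so the six letters can be eliminated.
-/

section Elimination

variable {α ι : Type*} {rels : Set (FreeGroup α)} {basis : ι → α} {subst : α → FreeGroup ι}
  (lift_subst_rels : ∀ w ∈ rels, FreeGroup.lift subst w = 1)
  (subst_basis : ∀ x, subst (basis x) = FreeGroup.of x)
  (lift_basis_subst : ∀ x, FreeGroup.lift (fun y => PresentedGroup.of (rels := rels) (basis y))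
    (subst x) = PresentedGroup.of x)

/-- The isomorphism given by Tietze elimination of generators: `subst` rewrites each generator of
`⟨α | rels⟩` as a word in the generators `basis x`, fixing the latter, and all the relators become
trivial under this rewriting. -/
def freeGroupMulEquivOfElimination : FreeGroup ι ≃* PresentedGroup rels :=
  MonoidHom.toMulEquiv (FreeGroup.lift fun x => PresentedGroup.of (basis x))
    (PresentedGroup.toGroup lift_subst_rels)
    (by ext x; simp [subst_basis])
    (by ext x; simp [lift_basis_subst])

theorem freeGroupMulEquivOfElimination_of (x : ι) :
    freeGroupMulEquivOfElimination lift_subst_rels subst_basis lift_basis_subst (FreeGroup.of x) =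
      PresentedGroup.of (basis x) := by
  simp [freeGroupMulEquivOfElimination]

end Elimination

theorem lift_presentedGroup_of {α : Type*} (rels : Set (FreeGroup α)) :
    FreeGroup.lift PresentedGroup.of = PresentedGroup.mk rels := by
  ext x
  exact FreeGroup.lift_apply_of

section Letters

variable {G : Type*} [Group G] {φ : TLetter → G}

theorem lift_tWord (l : List TLetter) : FreeGroup.lift φ (tWord l) = (l.map φ).prod := by
  simp [tWord, map_list_prod, Function.comp_def]

theorem lift_tWord_mul_inv_eq_one_iff (A B : List TLetter) :
    FreeGroup.lift φ (tWord A * (tWord B)⁻¹) = 1 ↔ (A.map φ).prod = (B.map φ).prod := by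
  rw [map_mul, map_inv, mul_inv_eq_one, lift_tWord, lift_tWord]

/-- The Turkish homophone relations in solved form, for an assignment `φ` of group elements to the
letters: the six letters outside `turkishBasis` are expressed through those in it. -/
structure IsSolvedAssignment (φ : TLetter → G) : Prop where
  gg_eq_one : φ gg = 1
  h_eq_one : φ h = 1
  t_eq_one : φ t = 1
  ii_eq_a : φ ii = φ a
  i_eq_e : φ i = φ e
  a_eq : φ a = φ b * φ e * (φ y)⁻¹ * (φ b * φ e)⁻¹

theorem forall_turkishRels_lift_eq_one_iff :
    (∀ w ∈ turkishRels, FreeGroup.lift φ w = 1) ↔ IsSolvedAssignment φ := by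
  have kaan : ([k,a,a,n].map φ).prod = ([k,a,gg,a,n].map φ).prod ↔ φ gg = 1 := by
    simp
  have dershane : ([d,e,r,s,h,a,n,e].map φ).prod = ([d,e,r,s,a,n,e].map φ).prod ↔ φ h = 1 := by
    simp
  have hacettepe :
      ([h,a,c,e,t,t,e,p,e].map φ).prod = ([h,a,c,e,t,e,p,e].map φ).prod ↔ φ t = 1 := by
    simp
  have anittepe :
      ([a,n,ii,t,t,e,p,e].map φ).prod = ([a,n,ii,t,e,p,e].map φ).prod ↔ φ t = 1 := by
    simp
  have bakayim : ([b,a,k,a,y,ii,m].map φ).prod = ([b,a,k,ii,y,ii,m].map φ).prod ↔ φ a = φ ii := by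
    simp
  have icecek : ([i,cc,e,c,e,k].map φ).prod = ([i,cc,i,c,e,k].map φ).prod ↔ φ e = φ i := by
    simp
  have agabey : ([a,gg,a,b,e,y].map φ).prod = ([a,b,i].map φ).prod ↔
      φ gg * φ a * (φ b * φ e * φ y) = φ b * φ i := by
    simp [mul_assoc]
  have solve_a : φ a * (φ b * φ e * φ y) = φ b * φ e ↔
      φ a = φ b * φ e * (φ y)⁻¹ * (φ b * φ e)⁻¹ := by
    rw [← eq_mul_inv_iff_mul_eq, mul_inv_rev (φ b * φ e), mul_assoc (φ b * φ e)]
  simp only [turkishRels, Set.forall_mem_insert, Set.mem_singleton_iff, forall_eq,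
    lift_tWord_mul_inv_eq_one_iff, kaan, dershane, hacettepe, anittepe, bakayim, icecek, agabey]
  constructor
  · rintro ⟨gg_one, h_one, t_one, -, a_ii, e_i, abi⟩
    rw [gg_one, one_mul, ← e_i, solve_a] at abi
    exact ⟨gg_one, h_one, t_one, a_ii.symm, e_i.symm, abi⟩
  · rintro ⟨gg_one, h_one, t_one, ii_a, i_e, a_eq⟩
    refine ⟨gg_one, h_one, t_one, t_one, ii_a.symm, i_e.symm, ?_⟩
    rwa [gg_one, one_mul, i_e, solve_a]

/-- The rewriting of each letter as a word in the 23 basis letters: the `j`-th generator stands for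
`turkishBasis j`, so that `0`, `4`, `21` are `b`, `e`, `y`. -/
def turkishSubst : TLetter → FreeGroup (Fin 23)
  | a | ii => .of 0 * .of 4 * (.of 21)⁻¹ * (.of 0 * .of 4)⁻¹
  | gg | h | t => 1
  | b => .of 0
  | c => .of 1
  | cc => .of 2
  | d => .of 3
  | e | i => .of 4
  | f => .of 5
  | g => .of 6
  | j => .of 7
  | k => .of 8
  | l => .of 9
  | m => .of 10
  | n => .of 11
  | o => .of 12
  | oo => .of 13
  | p => .of 14
  | r => .of 15
  | s => .of 16
  | ss => .of 17
  | u => .of 18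
  | uu => .of 19
  | v => .of 20
  | y => .of 21
  | z => .of 22

theorem turkishSubst_turkishBasis (j : Fin 23) :
    turkishSubst (turkishBasis j) = FreeGroup.of j := by
  fin_cases j <;> rfl

theorem isSolvedAssignment_turkishSubst : IsSolvedAssignment turkishSubst :=
  ⟨rfl, rfl, rfl, rfl, rfl, rfl⟩

theorem IsSolvedAssignment.lift_turkishSubst (solved : IsSolvedAssignment φ) (x : TLetter) :
    FreeGroup.lift (fun j => φ (turkishBasis j)) (turkishSubst x) = φ x := by
  cases x
  case a => simp [turkishSubst, turkishBasis, solved.a_eq]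
  case ii => simp [turkishSubst, turkishBasis, solved.ii_eq_a, solved.a_eq]
  case gg => exact solved.gg_eq_one.symm
  case h => exact solved.h_eq_one.symm
  case t => exact solved.t_eq_one.symm
  case i => simp [turkishSubst, turkishBasis, solved.i_eq_e]
  all_goals exact FreeGroup.lift_apply_of

theorem isSolvedAssignment_presentedGroup_of :
    IsSolvedAssignment (PresentedGroup.of : TLetter → TurkishGroup) :=
  forall_turkishRels_lift_eq_one_iff.mp fun w hw => by
    rw [lift_presentedGroup_of, PresentedGroup.one_of_mem hw]

end Letters

/-- The Turkish homophonic quotient group is a free group with the images of the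
23 letters b, c, ç, d, e, f, g, j, k, l, m, n, o, ö, p, r, s, ş, u, ü, v, y, z
as a free basis. -/
theorem turkish_group_free_of_rank_23 :
    ∃ f : FreeGroup (Fin 23) ≃* TurkishGroup,
      ∀ i : Fin 23, f (FreeGroup.of i) = PresentedGroup.of (turkishBasis i) := by
  have lift_subst_rels := forall_turkishRels_lift_eq_one_iff.mpr isSolvedAssignment_turkishSubst
  have lift_basis_subst := isSolvedAssignment_presentedGroup_of.lift_turkishSubst
  exact ⟨freeGroupMulEquivOfElimination lift_subst_rels turkishSubst_turkishBasis lift_basis_subst,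
    freeGroupMulEquivOfElimination_of lift_subst_rels turkishSubst_turkishBasis lift_basis_subst⟩
end
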